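/- Let c₁, c₂ ∈ ℝ and let H : ℝ³ → ℝ³ be a C² vector field with compact support satisfying, for all y ∈ ℝ³, c₁ H(y) + c₂ (y·∇)H(y) + (∇×((∇×H)×H))(y) = 0. Then (c₁ − (3/2)c₂) ∫_{ℝ³} |H(y)|² dy = 0. In particular, if c₁ ≠ (3/2)c₂ then H ≡ 0. -/

import Mathlib

noncomputable section

open MeasureTheory Real Set
open scoped RealInnerProductSpace

abbrev R3 := EuclideanSpace ℝ (Fin 3)

def toR3 (v : Fin 3 → ℝ) : R3 := (WithLp.equiv 2 (Fin 3 → ℝ)).symm v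

/-- j-th partial derivative of a scalar function. -/
def pd (j : Fin 3) (f : R3 → ℝ) (x : R3) : ℝ :=
  fderiv ℝ f x (EuclideanSpace.single j 1)

/-- curl of a vector field on ℝ³. -/
def curl (F : R3 → R3) (x : R3) : R3 :=
  toR3 ![pd 1 (fun y => F y 2) x - pd 2 (fun y => F y 1) x,
         pd 2 (fun y => F y 0) x - pd 0 (fun y => F y 2) x,
         pd 0 (fun y => F y 1) x - pd 1 (fun y => F y 0) x]

/-- divergence of a vector field on ℝ³. -/
def divg (F : R3 → R3) (x : R3) : ℝ :=
  pd 0 (fun y => F y 0) x + pd 1 (fun y => F y 1) x + pd 2 (fun y => F y 2) x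

/-- cross product on ℝ³. -/
def cross (u v : R3) : R3 :=
  toR3 ![u 1 * v 2 - u 2 * v 1, u 2 * v 0 - u 0 * v 2, u 0 * v 1 - u 1 * v 0]

/-- the advective derivative (u·∇)v. -/
def adv (u v : R3 → R3) (x : R3) : R3 :=
  toR3 (fun i => ∑ j, u x j * pd j (fun y => v y i) x)

/-- B is a pointwise solution of resistivity-free electron MHD at time t. -/
def IsEMHDAt (B : ℝ → R3 → R3) (t : ℝ) (x : R3) : Prop :=
  deriv (fun τ => B τ x) t + curl (fun y => cross (curl (B t) y) (B t y)) x = 0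
    ∧ divg (B t) x = 0

lemma integral_pd_eq_zero (j : Fin 3) (f : R3 → ℝ) (hf : ContDiff ℝ 1 f)
    (hs : HasCompactSupport f) : Integrable (pd j f) ∧ ∫ x, pd j f x = 0 := by
  have hc : Continuous (pd j f) := by
    have := hf.continuous_fderiv (by norm_num)
    unfold pd
    fun_prop
  have hs' : HasCompactSupport (pd j f) := by
    have := hs.fderiv_apply (𝕜 := ℝ) (EuclideanSpace.single j (1 : ℝ))
    exact this
  have hi := hc.integrable_of_hasCompactSupport (μ := volume) hs'
  refine ⟨hi, ?_⟩
  have h := integral_mul_fderiv_eq_neg_fderiv_mul_of_integrable (μ := (volume : Measure R3))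
    (f := fun _ : R3 => (1 : ℝ)) (g := f) (v := EuclideanSpace.single j (1 : ℝ))
    (by simp) (by simp only [one_mul]; exact hi)
    (by simpa using hf.continuous.integrable_of_hasCompactSupport hs)
    (fun x _ => by fun_prop) (fun x _ => (hf.differentiable (by norm_num)) x)
  simpa [pd] using h

lemma pd_mul (j : Fin 3) {f g : R3 → ℝ} {x : R3} (hf : DifferentiableAt ℝ f x)
    (hg : DifferentiableAt ℝ g x) :
    pd j (fun y => f y * g y) x = f x * pd j g x + g x * pd j f x := by
  unfold pd
  rw [fderiv_fun_mul hf hg]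
  simp

lemma pd_add (j : Fin 3) {f g : R3 → ℝ} {x : R3} (hf : DifferentiableAt ℝ f x)
    (hg : DifferentiableAt ℝ g x) :
    pd j (fun y => f y + g y) x = pd j f x + pd j g x := by
  unfold pd
  rw [fderiv_fun_add hf hg]
  simp

lemma pd_sub (j : Fin 3) {f g : R3 → ℝ} {x : R3} (hf : DifferentiableAt ℝ f x)
    (hg : DifferentiableAt ℝ g x) :
    pd j (fun y => f y - g y) x = pd j f x - pd j g x := by
  unfold pd
  rw [fderiv_fun_sub hf hg]
  simp

lemma pd_coord (j : Fin 3) (x : R3) : pd j (fun y => y j) x = 1 := by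
  have : HasFDerivAt (fun y : R3 => y j) (EuclideanSpace.proj j : R3 →L[ℝ] ℝ) x :=
    (EuclideanSpace.proj j : R3 →L[ℝ] ℝ).hasFDerivAt
  unfold pd
  rw [this.fderiv]
  simp

/-- The flux `k y_j |h|^2 + (a p - b q)`. -/
def flux (k : ℝ) (j : Fin 3) (h₀ h₁ h₂ a p b q : R3 → ℝ) (y : R3) : ℝ :=
  k * (y j * (h₀ y * h₀ y + h₁ y * h₁ y + h₂ y * h₂ y)) + (a y * p y - b y * q y)

lemma pd_flux (k : ℝ) (j : Fin 3) {h₀ h₁ h₂ a p b q : R3 → ℝ} (y : R3)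
    (d₀ : Differentiable ℝ h₀) (d₁ : Differentiable ℝ h₁) (d₂ : Differentiable ℝ h₂)
    (da : Differentiable ℝ a) (dp : Differentiable ℝ p) (db : Differentiable ℝ b)
    (dq : Differentiable ℝ q) :
    pd j (flux k j h₀ h₁ h₂ a p b q) y =
      k * (h₀ y * h₀ y + h₁ y * h₁ y + h₂ y * h₂ y
        + 2 * y j * (h₀ y * pd j h₀ y + h₁ y * pd j h₁ y + h₂ y * pd j h₂ y))
      + (a y * pd j p y + p y * pd j a y - b y * pd j q y - q y * pd j b y) := by
  have hk : pd j (fun _ : R3 => k) y = 0 := by simp [pd]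
  unfold flux
  rw [pd_add j (by fun_prop) (by fun_prop), pd_mul j (by fun_prop) (by fun_prop),
    pd_mul j (by fun_prop) (by fun_prop), pd_add j (by fun_prop) (by fun_prop),
    pd_add j (by fun_prop) (by fun_prop), pd_sub j (by fun_prop) (by fun_prop),
    pd_mul j (d₀ y) (d₀ y), pd_mul j (d₁ y) (d₁ y), pd_mul j (d₂ y) (d₂ y),
    pd_mul j (da y) (dp y), pd_mul j (db y) (dq y), pd_coord, hk]
  ring

lemma contDiff_pd (j : Fin 3) {f : R3 → ℝ} (hf : ContDiff ℝ 2 f) : ContDiff ℝ 1 (pd j f) := by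
  have : ContDiff ℝ 1 (fderiv ℝ f) := hf.fderiv_right (by norm_num)
  unfold pd
  fun_prop

lemma flux_facts (k : ℝ) (j : Fin 3) {h₀ h₁ h₂ a p b q : R3 → ℝ}
    (d₀ : ContDiff ℝ 2 h₀) (d₁ : ContDiff ℝ 2 h₁) (d₂ : ContDiff ℝ 2 h₂)
    (da : ContDiff ℝ 1 a) (dp : ContDiff ℝ 2 p) (db : ContDiff ℝ 1 b)
    (dq : ContDiff ℝ 2 q) (s₀ : HasCompactSupport h₀) (s₁ : HasCompactSupport h₁)
    (s₂ : HasCompactSupport h₂) (sp : HasCompactSupport p) (sq : HasCompactSupport q) :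
    Integrable (pd j (flux k j h₀ h₁ h₂ a p b q)) ∧
      ∫ x, pd j (flux k j h₀ h₁ h₂ a p b q) x = 0 := by
  apply integral_pd_eq_zero
  · have e₀ := d₀.of_le (m := 1) (by norm_num)
    have e₁ := d₁.of_le (m := 1) (by norm_num)
    have e₂ := d₂.of_le (m := 1) (by norm_num)
    have ep := dp.of_le (m := 1) (by norm_num)
    have eq := dq.of_le (m := 1) (by norm_num)
    have ey : ContDiff ℝ 1 (fun y : R3 => y j) :=
      (EuclideanSpace.proj j : R3 →L[ℝ] ℝ).contDiff
    unfold flux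
    fun_prop
  · have hq := (((s₀.mul_left (f := h₀)).add (s₁.mul_left (f := h₁))).add
      (s₂.mul_left (f := h₂)))
    have h1 := (hq.mul_left (f := fun y : R3 => y j)).mul_left (f := fun _ : R3 => k)
    have h2 := (sp.mul_left (f := a)).sub (sq.mul_left (f := b))
    exact h1.add h2

/-- energy identity for the profile equation of pseudo-self-similar
solutions. -/
theorem profile_energy_identity (c₁ c₂ : ℝ) (H : R3 → R3) (hH : ContDiff ℝ 2 H)
    (hsupp : HasCompactSupport H)
    (heq : ∀ y : R3,
      c₁ • H y + c₂ • (toR3 fun i => ∑ j, y j * pd j (fun z => H z i) y)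
        + curl (fun z => cross (curl H z) (H z)) y = 0) :
    (c₁ - (3 / 2) * c₂) * ∫ y : R3, ‖H y‖ ^ 2 = 0 := by
  set h₀ : R3 → ℝ := fun y => H y 0 with hh₀
  set h₁ : R3 → ℝ := fun y => H y 1 with hh₁
  set h₂ : R3 → ℝ := fun y => H y 2 with hh₂
  have dH : ∀ i, ContDiff ℝ 2 (fun y => H y i) := fun i =>
    (EuclideanSpace.proj i : R3 →L[ℝ] ℝ).contDiff.comp hH
  have sH : ∀ i, HasCompactSupport (fun y => H y i) := fun i =>
    hsupp.comp_left (g := fun v : R3 => v i) (by simp)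
  have d₀ : ContDiff ℝ 2 h₀ := dH 0
  have d₁ : ContDiff ℝ 2 h₁ := dH 1
  have d₂ : ContDiff ℝ 2 h₂ := dH 2
  have s₀ : HasCompactSupport h₀ := sH 0
  have s₁ : HasCompactSupport h₁ := sH 1
  have s₂ : HasCompactSupport h₂ := sH 2
  obtain ⟨a₀, ha₀⟩ : ∃ a : R3 → ℝ, a = fun y => (pd 2 h₀ y - pd 0 h₂ y) * h₂ y
    - (pd 0 h₁ y - pd 1 h₀ y) * h₁ y := ⟨_, rfl⟩
  obtain ⟨a₁, ha₁⟩ : ∃ a : R3 → ℝ, a = fun y => (pd 0 h₁ y - pd 1 h₀ y) * h₀ y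
    - (pd 1 h₂ y - pd 2 h₁ y) * h₂ y := ⟨_, rfl⟩
  obtain ⟨a₂, ha₂⟩ : ∃ a : R3 → ℝ, a = fun y => (pd 1 h₂ y - pd 2 h₁ y) * h₁ y
    - (pd 2 h₀ y - pd 0 h₂ y) * h₀ y := ⟨_, rfl⟩
  have e₀ := d₀.of_le (m := 1) (by norm_num)
  have e₁ := d₁.of_le (m := 1) (by norm_num)
  have e₂ := d₂.of_le (m := 1) (by norm_num)
  have p₀ := fun j => contDiff_pd j d₀
  have p₁ := fun j => contDiff_pd j d₁
  have p₂ := fun j => contDiff_pd j d₂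
  have da₀ : ContDiff ℝ 1 a₀ := by
    rw [ha₀]
    exact (((p₀ 2).sub (p₂ 0)).mul e₂).sub (((p₁ 0).sub (p₀ 1)).mul e₁)
  have da₁ : ContDiff ℝ 1 a₁ := by
    rw [ha₁]
    exact (((p₁ 0).sub (p₀ 1)).mul e₀).sub (((p₂ 1).sub (p₁ 2)).mul e₂)
  have da₂ : ContDiff ℝ 1 a₂ := by
    rw [ha₂]
    exact (((p₂ 1).sub (p₁ 2)).mul e₁).sub (((p₀ 2).sub (p₂ 0)).mul e₀)
  have q₀ : ∀ y, c₁ * h₀ y + c₂ * (y 0 * pd 0 h₀ y + y 1 * pd 1 h₀ y + y 2 * pd 2 h₀ y)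
      + (pd 1 a₂ y - pd 2 a₁ y) = 0 := by
    intro y
    have := congrArg (fun v : R3 => v 0) (heq y)
    simp only [PiLp.add_apply, PiLp.smul_apply, smul_eq_mul, PiLp.zero_apply] at this
    rw [← this, ha₂, ha₁, ← Fin.sum_univ_three (fun j => y j * pd j h₀ y)]
    rfl
  have q₁ : ∀ y, c₁ * h₁ y + c₂ * (y 0 * pd 0 h₁ y + y 1 * pd 1 h₁ y + y 2 * pd 2 h₁ y)
      + (pd 2 a₀ y - pd 0 a₂ y) = 0 := by
    intro y
    have := congrArg (fun v : R3 => v 1) (heq y)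
    simp only [PiLp.add_apply, PiLp.smul_apply, smul_eq_mul, PiLp.zero_apply] at this
    rw [← this, ha₂, ha₀, ← Fin.sum_univ_three (fun j => y j * pd j h₁ y)]
    rfl
  have q₂ : ∀ y, c₁ * h₂ y + c₂ * (y 0 * pd 0 h₂ y + y 1 * pd 1 h₂ y + y 2 * pd 2 h₂ y)
      + (pd 0 a₁ y - pd 1 a₀ y) = 0 := by
    intro y
    have := congrArg (fun v : R3 => v 2) (heq y)
    simp only [PiLp.add_apply, PiLp.smul_apply, smul_eq_mul, PiLp.zero_apply] at this
    rw [← this, ha₁, ha₀, ← Fin.sum_univ_three (fun j => y j * pd j h₂ y)]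
    rfl
  obtain ⟨i0, z0⟩ := flux_facts (c₂ / 2) 0 d₀ d₁ d₂ da₁ d₂ da₂ d₁ s₀ s₁ s₂ s₂ s₁
  obtain ⟨i1, z1⟩ := flux_facts (c₂ / 2) 1 d₀ d₁ d₂ da₂ d₀ da₀ d₂ s₀ s₁ s₂ s₀ s₂
  obtain ⟨i2, z2⟩ := flux_facts (c₂ / 2) 2 d₀ d₁ d₂ da₀ d₁ da₁ d₀ s₀ s₁ s₂ s₁ s₀
  have D₀ := e₀.differentiable (by norm_num)
  have D₁ := e₁.differentiable (by norm_num)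
  have D₂ := e₂.differentiable (by norm_num)
  have A₀ := da₀.differentiable (by norm_num)
  have A₁ := da₁.differentiable (by norm_num)
  have A₂ := da₂.differentiable (by norm_num)
  have key : ∀ y, (c₁ - (3 / 2) * c₂) * ‖H y‖ ^ 2 =
      -(pd 0 (flux (c₂ / 2) 0 h₀ h₁ h₂ a₁ h₂ a₂ h₁) y
      + pd 1 (flux (c₂ / 2) 1 h₀ h₁ h₂ a₂ h₀ a₀ h₂) y
      + pd 2 (flux (c₂ / 2) 2 h₀ h₁ h₂ a₀ h₁ a₁ h₀) y) := by
    intro y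
    have hn : ‖H y‖ ^ 2 = h₀ y * h₀ y + h₁ y * h₁ y + h₂ y * h₂ y := by
      rw [EuclideanSpace.norm_sq_eq, Fin.sum_univ_three]
      simp [hh₀, hh₁, hh₂, sq]
    have v₀ := congrFun ha₀ y
    have v₁ := congrFun ha₁ y
    have v₂ := congrFun ha₂ y
    have hort : a₀ y * (pd 1 h₂ y - pd 2 h₁ y) + a₁ y * (pd 2 h₀ y - pd 0 h₂ y)
        + a₂ y * (pd 0 h₁ y - pd 1 h₀ y) = 0 := by
      rw [v₀, v₁, v₂]; ring
    rw [hn, pd_flux _ _ y D₀ D₁ D₂ A₁ D₂ A₂ D₁, pd_flux _ _ y D₀ D₁ D₂ A₂ D₀ A₀ D₂,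
      pd_flux _ _ y D₀ D₁ D₂ A₀ D₁ A₁ D₀]
    linear_combination h₀ y * q₀ y + h₁ y * q₁ y + h₂ y * q₂ y - hort
  rw [← integral_const_mul]
  simp_rw [key]
  have i01 : Integrable (fun y => pd 0 (flux (c₂ / 2) 0 h₀ h₁ h₂ a₁ h₂ a₂ h₁) y
      + pd 1 (flux (c₂ / 2) 1 h₀ h₁ h₂ a₂ h₀ a₀ h₂) y) := i0.add i1
  rw [integral_neg, integral_add i01 i2, integral_add i0 i1, z0, z1, z2]
  simp
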